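/- Let N be odd, α ∈ ℝ with α ≠ 1, and set α' = (α+3)/(α−1). Suppose v, w ∈ V_N are nonzero vectors such that H(α) v = E(α) v, H(α') w = E(α') w, both v(μ) = 0 and w(μ) = 0 whenever n₊(μ) is odd, w(−) ≠ 0 where (−) is the all-minus configuration, and the eigenspace {u ∈ V_N : H(α') u = E(α') u} has complex dimension exactly 2. Then the quadratic sum rule 2^{N−1} · w(−)² · Σ_μ v(μ)² = (Σ_μ v(μ))² · Σ_μ w(μ)² holds, where all sums run over all 2^N configurations. -/

import Mathlib

open Finset

/-- Spin configurations of length `N`: maps `ℤ/N → {−1,+1}` (spins encoded as units of `ℤ`). -/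
abbrev Config (N : ℕ) : Type := ZMod N → ℤˣ

/-- The state space `V_N`: complex-valued functions on configurations. -/
abbrev StateSpace (N : ℕ) : Type := Config N → ℂ

/-- The spin value `μ_j` as a complex number (`+1` or `−1`). -/
def spin {N : ℕ} (μ : Config N) (j : ZMod N) : ℂ := ((μ j : ℤ) : ℂ)

/-- Flip the spin at site `j`. -/
def flipAt {N : ℕ} (μ : Config N) (j : ZMod N) : Config N :=
  Function.update μ j (-(μ j))

/-- `μ^{(j,j+1)}`: the configuration `μ` with the spins at sites `j` and `j+1` (mod `N`) flipped. -/
def flipPair {N : ℕ} (μ : Config N) (j : ZMod N) : Config N :=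
  flipAt (flipAt μ j) (j + 1)

/-- The periodic XYZ Hamiltonian with real couplings `Jx, Jy, Jz`:
`(H Ψ)(μ) = −(1/2) Σ_j [(Jx − Jy μ_j μ_{j+1}) Ψ(μ^{(j,j+1)}) + Jz μ_j μ_{j+1} Ψ(μ)]`. -/
noncomputable def Hxyz (N : ℕ) [NeZero N] (Jx Jy Jz : ℝ) (Ψ : StateSpace N) : StateSpace N :=
  fun μ => -(1/2 : ℂ) * ∑ j : ZMod N,
    (((Jx : ℂ) - (Jy : ℂ) * spin μ j * spin μ (j + 1)) * Ψ (flipPair μ j)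
      + (Jz : ℂ) * spin μ j * spin μ (j + 1) * Ψ μ)

/-- `n₊(μ)`: the number of sites `j` with `μ_j = +1`. -/
def nPlus {N : ℕ} [NeZero N] (μ : Config N) : ℕ :=
  (Finset.univ.filter (fun j => μ j = 1)).card

/-- `H(α)`: the XYZ Hamiltonian with `Jx = 1+α`, `Jy = 1−α`, `Jz = (α²−1)/2`. -/
noncomputable def Halpha (N : ℕ) [NeZero N] (α : ℝ) : StateSpace N → StateSpace N :=
  Hxyz N (1 + α) (1 - α) ((α ^ 2 - 1) / 2)

/-- `E(α) = −(N/4)(3 + α²)`. -/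
noncomputable def Eval (N : ℕ) (α : ℝ) : ℝ := -(N / 4 : ℝ) * (3 + α ^ 2)

/-- The periodic XYZ Hamiltonian as a linear operator on `V_N`. -/
noncomputable def HxyzL (N : ℕ) [NeZero N] (Jx Jy Jz : ℝ) : Module.End ℂ (StateSpace N) where
  toFun := Hxyz N Jx Jy Jz
  map_add' Ψ Φ := by
    funext μ
    simp only [Hxyz, Pi.add_apply, mul_add, add_mul, Finset.sum_add_distrib]
    ring
  map_smul' c Ψ := by
    funext μ
    simp only [Hxyz, Pi.smul_apply, smul_eq_mul, RingHom.id_apply, mul_add, add_mul,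
      Finset.mul_sum, Finset.sum_add_distrib]
    congr 1 <;> exact Finset.sum_congr rfl (fun j _ => by ring)

/-- `H(α)` as a linear operator on `V_N`. -/
noncomputable def HalphaL (N : ℕ) [NeZero N] (α : ℝ) : Module.End ℂ (StateSpace N) :=
  HxyzL N (1 + α) (1 - α) ((α ^ 2 - 1) / 2)

section WalshTransform

variable {N : ℕ}

/-- The sign `-1` when both spins are `+1`, and `+1` otherwise. -/
def pairSign (a b : ℤˣ) : ℂ := if a = 1 ∧ b = 1 then -1 else 1

theorem pairSign_comm (a b : ℤˣ) : pairSign a b = pairSign b a := by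
  simp only [pairSign, and_comm]

theorem pairSign_neg_left (a b : ℤˣ) : pairSign (-a) b = -((b : ℤ) : ℂ) * pairSign a b := by
  rcases Int.units_eq_one_or a with rfl | rfl <;> rcases Int.units_eq_one_or b with rfl | rfl <;>
    norm_num [pairSign]

theorem sum_pairSign_mul_pairSign (b c : ℤˣ) :
    ∑ a : ℤˣ, pairSign a b * pairSign a c = if b = c then 2 else 0 := by
  rw [show (Finset.univ : Finset ℤˣ) = {1, -1} from rfl, Finset.sum_pair (by decide)]
  rcases Int.units_eq_one_or b with rfl | rfl <;> rcases Int.units_eq_one_or c with rfl | rfl <;>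
    norm_num [pairSign]

theorem spin_mul_self (μ : Config N) (j : ZMod N) : spin μ j * spin μ j = 1 := by
  rcases Int.units_eq_one_or (μ j) with h | h <;> simp [spin, h]

theorem flipAt_flipAt_self (μ : Config N) (j : ZMod N) : flipAt (flipAt μ j) j = μ := by
  simp [flipAt]

theorem flipAt_comm (μ : Config N) (i j : ZMod N) :
    flipAt (flipAt μ i) j = flipAt (flipAt μ j) i := by
  by_cases h : i = j
  · rw [h]
  · simp [flipAt, Function.update_of_ne h, Function.update_of_ne (Ne.symm h),
      Function.update_comm h]

theorem flipAt_neg (μ : Config N) (j : ZMod N) : flipAt (-μ) j = -flipAt μ j := by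
  funext k
  by_cases h : k = j
  · subst h; simp [flipAt]
  · simp [flipAt, h]

theorem flipPair_involutive (j : ZMod N) :
    Function.Involutive (fun μ : Config N => flipPair μ j) := fun μ => by
  simp only [flipPair]
  rw [flipAt_comm μ j, flipAt_flipAt_self, flipAt_flipAt_self]

theorem flipPair_neg (μ : Config N) (j : ZMod N) : flipPair (-μ) j = -flipPair μ j := by
  simp only [flipPair, flipAt_neg]

theorem spin_neg (μ : Config N) (j : ZMod N) : spin (-μ) j = -spin μ j := by
  simp [spin]

theorem spin_flipAt (μ : Config N) (i j : ZMod N) :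
    spin (flipAt μ i) j = if j = i then -spin μ j else spin μ j := by
  by_cases h : j = i
  · subst h; simp [spin, flipAt]
  · simp [spin, flipAt, h]

theorem spin_flipPair_mul (μ : Config N) (j : ZMod N) :
    spin (flipPair μ j) j * spin (flipPair μ j) (j + 1) = spin μ j * spin μ (j + 1) := by
  by_cases h : j = j + 1
  · simp only [← h, spin_mul_self]
  · simp [flipPair, spin_flipAt, h, Ne.symm h]

variable [NeZero N]

/-- The kernel of the Walsh transform, the product of the sitewise signs. -/
def walshKernel (μ ν : Config N) : ℂ := ∏ j, pairSign (μ j) (ν j)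

theorem walshKernel_comm (μ ν : Config N) : walshKernel μ ν = walshKernel ν μ :=
  Finset.prod_congr rfl fun _ _ => pairSign_comm _ _

theorem walshKernel_flipAt (μ ν : Config N) (j : ZMod N) :
    walshKernel (flipAt μ j) ν = -spin ν j * walshKernel μ ν := by
  simp only [walshKernel]
  rw [← Finset.mul_prod_erase univ _ (Finset.mem_univ j),
    ← Finset.mul_prod_erase univ (fun k => pairSign (μ k) (ν k)) (Finset.mem_univ j), ← mul_assoc]
  congr 1
  · simp [flipAt, pairSign_neg_left, spin]
  · refine Finset.prod_congr rfl fun k hk => ?_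
    simp [flipAt, Finset.ne_of_mem_erase hk]

theorem walshKernel_flipPair (μ ν : Config N) (j : ZMod N) :
    walshKernel (flipPair μ j) ν = spin ν j * spin ν (j + 1) * walshKernel μ ν := by
  rw [flipPair, walshKernel_flipAt, walshKernel_flipAt]
  ring

theorem walshKernel_neg (μ ν : Config N) :
    walshKernel (-μ) ν = (-1) ^ nPlus ν * walshKernel μ ν := by
  have h : ∀ j, -((ν j : ℤ) : ℂ) = if ν j = 1 then -1 else 1 := fun j => by
    rcases Int.units_eq_one_or (ν j) with h | h <;> norm_num [h]
  simp only [walshKernel, Pi.neg_apply, pairSign_neg_left, Finset.prod_mul_distrib, h,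
    Finset.prod_ite, Finset.prod_const, one_pow, mul_one, nPlus]

theorem walshKernel_neg_one (ν : Config N) : walshKernel (-1) ν = 1 := by
  simp [walshKernel, pairSign]

theorem sum_walshKernel_mul_walshKernel (ν ξ : Config N) :
    ∑ μ, walshKernel μ ν * walshKernel μ ξ = if ν = ξ then 2 ^ N else 0 := by
  simp only [walshKernel, ← Finset.prod_mul_distrib]
  rw [← Fintype.prod_sum (fun j a => pairSign a (ν j) * pairSign a (ξ j))]
  simp only [sum_pairSign_mul_pairSign]
  split_ifs with h
  · simp [h, ZMod.card]
  · obtain ⟨j, hj⟩ := Function.ne_iff.mp h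
    exact Finset.prod_eq_zero (Finset.mem_univ j) (if_neg hj)

/-- The (unnormalised) Walsh transform, which exchanges the `x` and `z` axes. -/
def walsh (v : StateSpace N) : StateSpace N := fun μ => ∑ ν, walshKernel μ ν * v ν

theorem walsh_neg_one (v : StateSpace N) : walsh v (-1) = ∑ ν, v ν := by
  simp [walsh, walshKernel_neg_one]

theorem walsh_neg_of_even {v : StateSpace N} (hv : ∀ μ, Odd (nPlus μ) → v μ = 0)
    (μ : Config N) : walsh v (-μ) = walsh v μ := by
  refine Finset.sum_congr rfl fun ν _ => ?_
  rcases Nat.even_or_odd (nPlus ν) with h | h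
  · rw [walshKernel_neg, h.neg_one_pow, one_mul]
  · simp [hv ν h]

theorem sum_walsh_sq (v : StateSpace N) : ∑ μ, walsh v μ ^ 2 = 2 ^ N * ∑ ν, v ν ^ 2 := by
  calc ∑ μ, walsh v μ ^ 2
      = ∑ μ, ∑ ν, ∑ ξ, walshKernel μ ν * walshKernel μ ξ * (v ν * v ξ) := by
        refine Finset.sum_congr rfl fun μ _ => ?_
        rw [sq, walsh, Finset.sum_mul_sum]
        exact Finset.sum_congr rfl fun ν _ => Finset.sum_congr rfl fun ξ _ => by ring
    _ = ∑ ν, ∑ ξ, ∑ μ, walshKernel μ ν * walshKernel μ ξ * (v ν * v ξ) := by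
        rw [Finset.sum_comm]
        exact Finset.sum_congr rfl fun ν _ => Finset.sum_comm
    _ = 2 ^ N * ∑ ν, v ν ^ 2 := by
        simp only [← Finset.sum_mul, sum_walshKernel_mul_walshKernel, ite_mul, zero_mul,
          Finset.sum_ite_eq, Finset.mem_univ, if_true, Finset.mul_sum, sq]

theorem walsh_flipPair (v : StateSpace N) (μ : Config N) (j : ZMod N) :
    walsh v (flipPair μ j) = ∑ ν, walshKernel μ ν * (spin ν j * spin ν (j + 1) * v ν) := by
  refine Finset.sum_congr rfl fun ν _ => ?_
  rw [walshKernel_flipPair]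
  ring

theorem sum_walshKernel_mul_flipPair (v : StateSpace N) (μ : Config N) (j : ZMod N) :
    ∑ ν, walshKernel μ ν * v (flipPair ν j) = spin μ j * spin μ (j + 1) * walsh v μ := by
  rw [walsh, Finset.mul_sum]
  refine Fintype.sum_equiv (flipPair_involutive j).toPerm _ _ fun ν => ?_
  have h : walshKernel μ (flipPair ν j) = spin μ j * spin μ (j + 1) * walshKernel μ ν := by
    rw [walshKernel_comm, walshKernel_flipPair, walshKernel_comm]
  have hj := spin_mul_self μ j
  have hj' := spin_mul_self μ (j + 1)
  simp only [Function.Involutive.coe_toPerm, h]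
  linear_combination (-walshKernel μ ν * v (flipPair ν j)) *
    (spin μ (j + 1) * spin μ (j + 1) * hj + hj')

/-- The Walsh transform intertwines XYZ Hamiltonians with the `x` and `z` couplings exchanged. -/
theorem Hxyz_walsh (Jx Jy Jz : ℝ) (v : StateSpace N) :
    Hxyz N Jz Jy Jx (walsh v) = walsh (Hxyz N Jx Jy Jz v) := by
  funext μ
  have hsite : ∀ j : ZMod N,
      ((Jz : ℂ) - Jy * spin μ j * spin μ (j + 1)) * walsh v (flipPair μ j)
        + Jx * spin μ j * spin μ (j + 1) * walsh v μ
      = ∑ ν, walshKernel μ ν * (((Jx : ℂ) - Jy * spin ν j * spin ν (j + 1)) * v (flipPair ν j)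
        + Jz * spin ν j * spin ν (j + 1) * v ν) := fun j => by
    have h := sum_walshKernel_mul_flipPair (fun ν => spin ν j * spin ν (j + 1) * v ν) μ j
    simp only [spin_flipPair_mul] at h
    calc _ = Jx * (spin μ j * spin μ (j + 1) * walsh v μ)
          - Jy * (spin μ j * spin μ (j + 1) * walsh v (flipPair μ j))
          + Jz * walsh v (flipPair μ j) := by ring
      _ = _ := by
        conv_lhs => rw [← sum_walshKernel_mul_flipPair, walsh_flipPair]
        change _ - _ * (_ * walsh (fun ν => spin ν j * spin ν (j + 1) * v ν) μ) + _ = _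
        rw [← h, Finset.mul_sum, Finset.mul_sum, Finset.mul_sum, ← Finset.sum_sub_distrib,
          ← Finset.sum_add_distrib]
        exact Finset.sum_congr rfl fun ν _ => by ring
  simp only [Hxyz, hsite]
  rw [Finset.sum_comm, walsh, Finset.mul_sum]
  refine Finset.sum_congr rfl fun ν _ => ?_
  rw [← Finset.mul_sum, Hxyz]
  ring

/-- Scaling all couplings scales the Hamiltonian. -/
theorem Hxyz_mul (c Jx Jy Jz : ℝ) (v : StateSpace N) :
    Hxyz N (c * Jx) (c * Jy) (c * Jz) v = (c : ℂ) • Hxyz N Jx Jy Jz v := by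
  funext μ
  simp only [Hxyz, Pi.smul_apply, smul_eq_mul, Complex.ofReal_mul, Finset.mul_sum]
  exact Finset.sum_congr rfl fun j _ => by ring

theorem walsh_smul (c : ℂ) (v : StateSpace N) : walsh (c • v) = c • walsh v := by
  funext μ
  simp only [walsh, Pi.smul_apply, smul_eq_mul, Finset.mul_sum]
  exact Finset.sum_congr rfl fun ν _ => by ring

/-- The Walsh transform maps the eigenspace at `α` to the eigenspace at `(α + 3) / (α - 1)`. -/
theorem Halpha_walsh {α : ℝ} (hα : α ≠ 1) {v : StateSpace N}
    (hv : Halpha N α v = ((Eval N α : ℝ) : ℂ) • v) :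
    Halpha N ((α + 3) / (α - 1)) (walsh v)
      = ((Eval N ((α + 3) / (α - 1)) : ℝ) : ℂ) • walsh v := by
  have hα' : α - 1 ≠ 0 := sub_ne_zero.mpr hα
  have hx : 1 + (α + 3) / (α - 1) = 4 / (α - 1) ^ 2 * ((α ^ 2 - 1) / 2) := by
    field_simp; ring
  have hy : 1 - (α + 3) / (α - 1) = 4 / (α - 1) ^ 2 * (1 - α) := by
    field_simp; ring
  have hz : (((α + 3) / (α - 1)) ^ 2 - 1) / 2 = 4 / (α - 1) ^ 2 * (1 + α) := by
    field_simp; ring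
  have hE : Eval N ((α + 3) / (α - 1)) = 4 / (α - 1) ^ 2 * Eval N α := by
    simp only [Eval]; field_simp; ring
  rw [Halpha, hx, hy, hz, Hxyz_mul, Hxyz_walsh, hE]
  rw [Halpha] at hv
  rw [hv, walsh_smul, smul_smul, Complex.ofReal_mul]

/-- XYZ Hamiltonians commute with the global spin flip. -/
theorem Hxyz_comp_neg (Jx Jy Jz : ℝ) (v : StateSpace N) :
    Hxyz N Jx Jy Jz (fun μ => v (-μ)) = fun μ => Hxyz N Jx Jy Jz v (-μ) := by
  funext μ
  simp only [Hxyz, flipPair_neg, spin_neg]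
  congr 1
  exact Finset.sum_congr rfl fun j _ => by ring

theorem nPlus_neg_add_nPlus (μ : Config N) : nPlus (-μ) + nPlus μ = N := by
  have h : ∀ j, (-μ) j = 1 ↔ ¬ μ j = 1 := fun j => by
    rcases Int.units_eq_one_or (μ j) with h | h <;> simp [h]
  simp only [nPlus, h]
  rw [add_comm, Finset.card_filter_add_card_filter_not, Finset.card_univ, ZMod.card]

end WalshTransform

/-- The quadratic sum rule `2^{N−1} w(−⋯−)² Σ_μ v(μ)² = (Σ_μ v(μ))² Σ_μ w(μ)²`. -/
theorem quadratic_sum_rule (N : ℕ) [NeZero N]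
    (hN : Odd N) (α : ℝ) (hα : α ≠ 1)
    (v w : StateSpace N) (hv0 : v ≠ 0) (hw0 : w ≠ 0)
    (hv : Halpha N α v = ((Eval N α : ℝ) : ℂ) • v)
    (hw : Halpha N ((α + 3) / (α - 1)) w = ((Eval N ((α + 3) / (α - 1)) : ℝ) : ℂ) • w)
    (hvpar : ∀ μ : Config N, Odd (nPlus μ) → v μ = 0)
    (hwpar : ∀ μ : Config N, Odd (nPlus μ) → w μ = 0)
    (hwm : w (fun _ => -1) ≠ 0)
    (hdim : Module.finrank ℂ
      (Module.End.eigenspace (HalphaL N ((α + 3) / (α - 1)))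
        ((Eval N ((α + 3) / (α - 1)) : ℝ) : ℂ)) = 2) :
    2 ^ (N - 1) * w (fun _ => -1) ^ 2 * ∑ μ : Config N, v μ ^ 2
      = (∑ μ : Config N, v μ) ^ 2 * ∑ μ : Config N, w μ ^ 2 := by
  let flip : StateSpace N → StateSpace N := fun u μ => u (-μ)
  have hmem : ∀ u : StateSpace N,
      Halpha N ((α + 3) / (α - 1)) u = ((Eval N ((α + 3) / (α - 1)) : ℝ) : ℂ) • u →
      u ∈ Module.End.eigenspace (HalphaL N ((α + 3) / (α - 1)))
        ((Eval N ((α + 3) / (α - 1)) : ℝ) : ℂ) :=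
    fun u hu => Module.End.mem_eigenspace_iff.mpr hu
  have hfw : Halpha N ((α + 3) / (α - 1)) (flip w)
      = ((Eval N ((α + 3) / (α - 1)) : ℝ) : ℂ) • flip w := by
    rw [Halpha] at hw ⊢
    rw [Hxyz_comp_neg, hw]
    rfl
  have hdisj : ∀ μ, w μ * w (-μ) = 0 := fun μ => by
    rcases Nat.even_or_odd (nPlus μ) with h | h
    · have : Odd (nPlus (-μ)) := by
        have hsum := nPlus_neg_add_nPlus μ
        rw [← hsum] at hN
        exact (Nat.odd_add.mp hN).mpr h
      rw [hwpar _ this, mul_zero]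
    · rw [hwpar _ h, zero_mul]
  change w (-1) ≠ 0 at hwm
  change 2 ^ (N - 1) * w (-1) ^ 2 * _ = _
  have hw1 : w 1 = 0 := by simpa [hwm] using hdisj (-1)
  have hli : LinearIndependent ℂ ![(⟨w, hmem w hw⟩ : Module.End.eigenspace
      (HalphaL N ((α + 3) / (α - 1))) ((Eval N ((α + 3) / (α - 1)) : ℝ) : ℂ)),
      ⟨flip w, hmem _ hfw⟩] := by
    refine LinearIndependent.pair_iff.mpr fun s t hst => ?_
    have hst' : s • w + t • flip w = 0 := congrArg Subtype.val hst
    have hm := congrFun hst' (-1)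
    have hp := congrFun hst' 1
    simp [flip, hw1, hwm] at hm hp
    exact ⟨hm, hp⟩
  have hspan := hli.span_eq_top_of_card_eq_finrank (by rw [hdim, Fintype.card_fin])
  have hv' := hmem _ (Halpha_walsh hα hv)
  have hin : (⟨walsh v, hv'⟩ : Module.End.eigenspace
      (HalphaL N ((α + 3) / (α - 1))) ((Eval N ((α + 3) / (α - 1)) : ℝ) : ℂ)) ∈
      Submodule.span ℂ (Set.range ![(⟨w, hmem w hw⟩ : Module.End.eigenspace
        (HalphaL N ((α + 3) / (α - 1))) ((Eval N ((α + 3) / (α - 1)) : ℝ) : ℂ)),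
        ⟨flip w, hmem _ hfw⟩]) := by
    rw [hspan]; exact Submodule.mem_top
  rw [Matrix.range_cons_cons_empty, Submodule.mem_span_pair] at hin
  obtain ⟨a, b, hab⟩ := hin
  have hdecomp : ∀ μ, walsh v μ = a * w μ + b * w (-μ) := fun μ =>
    (congrFun (congrArg Subtype.val hab) μ).symm
  have hminus := hdecomp (-1)
  have hplus := hdecomp 1
  rw [neg_neg, hw1, mul_zero, add_zero] at hminus
  rw [hw1, mul_zero, zero_add, ← walsh_neg_of_even hvpar, hminus] at hplus
  obtain rfl : a = b := mul_right_cancel₀ hwm hplus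
  rw [walsh_neg_one] at hminus
  have hsq : ∑ μ, walsh v μ ^ 2 = 2 * a ^ 2 * ∑ μ, w μ ^ 2 := by
    have hneg : ∑ μ : Config N, w (-μ) ^ 2 = ∑ μ, w μ ^ 2 :=
      Fintype.sum_equiv (Equiv.neg _) _ _ fun _ => rfl
    calc ∑ μ, walsh v μ ^ 2 = ∑ μ, (a ^ 2 * w μ ^ 2 + a ^ 2 * w (-μ) ^ 2) :=
          Finset.sum_congr rfl fun μ _ => by
            rw [hdecomp]; linear_combination 2 * a ^ 2 * hdisj μ
      _ = 2 * a ^ 2 * ∑ μ, w μ ^ 2 := by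
        rw [Finset.sum_add_distrib, ← Finset.mul_sum, ← Finset.mul_sum, hneg]; ring
  have hpow : (2 : ℂ) ^ N = 2 * 2 ^ (N - 1) := by
    rw [← pow_succ', Nat.sub_add_cancel (NeZero.one_le)]
  rw [sum_walsh_sq, hpow] at hsq
  rw [hminus]
  linear_combination w (-1) ^ 2 / 2 * hsq
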